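/- Let p be a prime, q = 1/p, let k ≥ 0 be an integer, and let x be a real number with |x| < 1. Then the series ∑_{μ=1}^∞ P(2k+1, p^μ)·x^μ converges and equals (x/(1−x)) · ((1−q·x²)/(1−q·x)) · ∏_{j=0}^{k} (1−q^{2j+1})/(1−q^{2j+1}·x²). -/

import Mathlib

/-- Number of symmetric `n × n` matrices over `ZMod m` with nonzero determinant. -/
noncomputable def Nsym (n m : ℕ) : ℕ :=
  Nat.card {A : Matrix (Fin n) (Fin n) (ZMod m) // A.IsSymm ∧ A.det ≠ 0}

/-- Proportion of symmetric `n × n` matrices over `ZMod m` with nonzero determinant. -/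
noncomputable def Psym (n m : ℕ) : ℝ :=
  (Nsym n m : ℝ) / (m : ℝ) ^ (n * (n + 1) / 2)

/-!
Let `R` be a finite local ring with residue field of order `1 / q` and maximal ideal `(ϖ)`, and
write a symmetric matrix of size `n + 1` as a corner `a`, a row `v` and a symmetric block `B`. Let
`f` be a function on `R` that ignores unit factors; we average `f (det A)`.

* If `a` is a unit, translating `B` by a Schur complement reduces to size `n`.
* If `a` is not a unit but some `v i` is, a unit `2 × 2` block splits off in the same way, which
  reduces to size `n - 1`.
* Otherwise `ϖ` divides the first row and can be taken out of it. The corner is then `a / ϖ`. If it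
  is a unit, a Schur complement leaves `ϖ * det` in size `n`; if not, `ϖ` can be taken out of the
  first column as well, which leaves `ϖ ^ 2 * det` in size `n + 1`.

Over `ZMod (p ^ N)`, multiplying the determinant by `p ^ j` lowers the modulus from `p ^ μ` to
`p ^ (μ - j)`, so the generating functions `F n` satisfy a three-term recurrence in `n`. It is
solved by explicit ratios of consecutive terms, which depend on the parity of `n`.
-/

open scoped BigOperators Matrix
open Function IsLocalRing

section Averages

lemma expect_indicator_one {ι K : Type*} [Fintype ι] [Field K] [CharZero K] (s : Set ι) :
    𝔼 i, s.indicator (1 : ι → K) i = Nat.card s / Nat.card ι := by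
  classical
  simp [Fintype.expect_eq_sum_div_card, Set.indicator_apply]

variable {G H K M : Type*} [AddGroup G] [Fintype G]

lemma expect_comp_of_surjective [AddGroup H] [Fintype H] [AddCommMonoid M] [Module ℚ≥0 M]
    {φ : G →+ H} (hφ : Surjective φ) (g : H → M) : 𝔼 x, g (φ x) = 𝔼 y, g y := by
  have translate (z : H) : 𝔼 x, g (φ x) = 𝔼 x, g (φ x + z) := by
    obtain ⟨w, rfl⟩ := hφ z
    exact (Fintype.expect_equiv (Equiv.addRight w) _ _ fun x => by simp).symm
  calc 𝔼 x, g (φ x)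
      = 𝔼 z, 𝔼 x, g (φ x + z) := by simp only [← translate, Fintype.expect_const]
    _ = 𝔼 x, 𝔼 z, g (φ x + z) := Finset.expect_comm _ _ _
    _ = 𝔼 _x : G, 𝔼 y, g y := Finset.expect_congr rfl fun x _ =>
        Fintype.expect_equiv (Equiv.addLeft (φ x)) _ _ fun _ => rfl
    _ = 𝔼 y, g y := Fintype.expect_const _

variable [Field K] [CharZero K]

lemma expect_eq_of_const_off_addSubgroup (S : AddSubgroup G) [Fintype S] {g : G → K} {c : K}
    (hg : ∀ x ∉ S, g x = c) :
    𝔼 x, g x = (1 - 1 / (S.index : K)) * c + 1 / (S.index : K) * 𝔼 z : S, g z := by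
  classical
  have sum_eq : ∑ x, (g x - c) = ∑ z : S, (g z - c) := by
    rw [← Finset.sum_filter_of_ne (p := (· ∈ S))
      fun x _ hx => by_contra fun h => hx (by rw [hg x h, sub_self])]
    exact Finset.sum_subtype _ (by simp) fun x => g x - c
  have card_eq : (Fintype.card G : K) = Fintype.card S * S.index := by
    rw [← Nat.card_eq_fintype_card, ← Nat.card_eq_fintype_card, ← S.card_mul_index, Nat.cast_mul]
  have card_ne_zero : (Fintype.card S : K) ≠ 0 := by simp
  have index_ne_zero : (S.index : K) ≠ 0 := Nat.cast_ne_zero.2 S.index_ne_zero_of_finite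
  simp only [Finset.sum_sub_distrib, Finset.sum_const, Finset.card_univ, nsmul_eq_mul,
    card_eq] at sum_eq
  rw [Fintype.expect_eq_sum_div_card, Fintype.expect_eq_sum_div_card, card_eq]
  field_simp
  linear_combination sum_eq

lemma expect_eq_of_const_off_range (φ : G →+ G) {g : G → K} {c : K}
    (hg : ∀ x ∉ φ.range, g x = c) :
    𝔼 x, g x = (1 - 1 / (φ.range.index : K)) * c + 1 / (φ.range.index : K) * 𝔼 y, g (φ y) := by
  have := Fintype.ofFinite φ.range
  rw [expect_eq_of_const_off_addSubgroup φ.range hg,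
    ← expect_comp_of_surjective φ.rangeRestrict_surjective]
  rfl

end Averages

section LocalRing

variable {R K : Type*} [CommRing R] [IsLocalRing R] {ϖ : R}

lemma mem_range_smul_pi_iff {ι : Type*} (hϖ : maximalIdeal R = Ideal.span {ϖ}) {v : ι → R} :
    v ∈ (DistribSMul.toAddMonoidHom (ι → R) ϖ).range ↔ ∀ i, ¬ IsUnit (v i) := by
  simp only [← mem_nonunits_iff, ← mem_maximalIdeal, hϖ, Ideal.mem_span_singleton, dvd_def,
    AddMonoidHom.mem_range, DistribSMul.toAddMonoidHom_apply, Classical.skolem, funext_iff,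
    Pi.smul_apply, smul_eq_mul, eq_comm]

lemma index_range_smul_pi (ι : Type*) [Fintype ι] (hϖ : maximalIdeal R = Ideal.span {ϖ}) :
    (DistribSMul.toAddMonoidHom (ι → R) ϖ).range.index
      = Nat.card (ResidueField R) ^ Fintype.card ι := by
  have range_eq : (DistribSMul.toAddMonoidHom (ι → R) ϖ).range
      = AddSubgroup.pi Set.univ fun _ => (maximalIdeal R).toAddSubgroup := by
    ext v
    simp [mem_range_smul_pi_iff hϖ, AddSubgroup.mem_pi]
  rw [range_eq, AddSubgroup.index_pi, Finset.prod_const, Finset.card_univ]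
  rfl

variable [Field K] [CharZero K] [Fintype R] {q : K}

lemma expect_pi_eq_of_isUnit_apply {ι : Type*} [Fintype ι] [DecidableEq ι]
    (hϖ : maximalIdeal R = Ideal.span {ϖ}) (hq : q = 1 / Nat.card (ResidueField R))
    {g : (ι → R) → K} {c : K} (hg : ∀ v i, IsUnit (v i) → g v = c) :
    𝔼 v, g v = (1 - q ^ Fintype.card ι) * c + q ^ Fintype.card ι * 𝔼 w, g (ϖ • w) := by
  have off_range (v) (hv : v ∉ (DistribSMul.toAddMonoidHom (ι → R) ϖ).range) : g v = c := by
    rw [mem_range_smul_pi_iff hϖ] at hv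
    push Not at hv
    exact hv.elim (hg v)
  rw [expect_eq_of_const_off_range _ off_range, index_range_smul_pi ι hϖ, hq, div_pow, one_pow,
    Nat.cast_pow]
  rfl

lemma expect_eq_of_isUnit (hϖ : maximalIdeal R = Ideal.span {ϖ})
    (hq : q = 1 / Nat.card (ResidueField R)) {g : R → K} {c : K}
    (hg : ∀ a, IsUnit a → g a = c) :
    𝔼 a, g a = (1 - q) * c + q * 𝔼 b, g (ϖ * b) := by
  have expect_funUnique (h : R → K) : 𝔼 v : Unit → R, h (v ()) = 𝔼 a, h a :=
    Fintype.expect_equiv (Equiv.funUnique Unit R) _ _ fun _ => rfl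
  rw [← expect_funUnique, ← expect_funUnique,
    expect_pi_eq_of_isUnit_apply hϖ hq fun v _ => hg (v ())]
  simp only [Fintype.card_unit, pow_one, Pi.smul_apply, smul_eq_mul]

end LocalRing

section SymmMatrices

variable (ι R : Type*) {κ S : Type*}

/-- The additive group of symmetric `ι × ι` matrices over `R`, a subgroup of `Matrix ι ι R` so that
it can be averaged over. -/
def symmMatrices [AddGroup R] : AddSubgroup (Matrix ι ι R) where
  carrier := {A | A.IsSymm}
  zero_mem' := Matrix.isSymm_zero
  add_mem' := Matrix.IsSymm.add
  neg_mem' := Matrix.IsSymm.neg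

variable {ι R}

namespace symmMatrices

noncomputable instance [AddGroup R] [Finite ι] [Finite R] : Fintype (symmMatrices ι R) :=
  Fintype.ofFinite _

/-- Symmetric matrices as functions on unordered pairs of indices. -/
def equivSym2 [AddGroup R] : symmMatrices ι R ≃ (Sym2 ι → R) :=
  (Equiv.subtypeEquivRight fun _ => Matrix.IsSymm.ext_iff.trans forall_comm).trans Sym2.lift

lemma natCard [AddGroup R] [Fintype ι] :
    Nat.card (symmMatrices ι R) = Nat.card R ^ (Fintype.card ι + 1).choose 2 := by
  rw [Nat.card_congr equivSym2, Nat.card_fun, Nat.card_eq_fintype_card (α := Sym2 ι),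
    Sym2.card]

/-- Relabelling of the index set of a symmetric matrix. -/
def reindex [AddGroup R] (e : ι ≃ κ) : symmMatrices ι R ≃ symmMatrices κ R :=
  (Matrix.reindex e e).subtypeEquiv fun _ => (Matrix.isSymm_reindex_iff e).symm

/-- Entrywise application of an additive homomorphism to a symmetric matrix. -/
def map [AddGroup R] [AddGroup S] (φ : R →+ S) : symmMatrices ι R →+ symmMatrices ι S :=
  (φ.mapMatrix.domRestrict _).codRestrict _ fun A => A.2.map φ

lemma map_surjective [AddGroup R] [AddGroup S] {φ : R →+ S} (hφ : Function.Surjective φ) :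
    Function.Surjective (map φ : symmMatrices ι R →+ symmMatrices ι S) := fun B =>
  ⟨⟨B.1.map (surjInv hφ), Matrix.IsSymm.map B.2 _⟩,
    Subtype.ext <| Matrix.ext fun _ _ => surjInv_eq hφ _⟩

end symmMatrices

/-- The matrix `B` bordered by a corner `a`, a first row `v` and a first column `w`. The row and the
column are independent because dividing the first row of a symmetric matrix by a scalar destroys
its symmetry. -/
def bordered (a : R) (v w : ι → R) (B : Matrix ι ι R) : Matrix (Unit ⊕ ι) (Unit ⊕ ι) R :=
  Matrix.fromBlocks (Matrix.of fun _ _ => a) (Matrix.replicateRow Unit v)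
    (Matrix.replicateCol Unit w) B

/-- Splitting a symmetric matrix into its corner, the rest of its first row, and the complementary
symmetric block. -/
def symmMatrices.borderedEquiv [AddGroup R] :
    R × (ι → R) × symmMatrices ι R ≃ symmMatrices (Unit ⊕ ι) R where
  toFun x := ⟨bordered x.1 x.2.1 x.2.1 x.2.2,
    .fromBlocks (Matrix.IsSymm.ext fun _ _ => rfl) (Matrix.transpose_replicateRow _) x.2.2.2⟩
  invFun A := ⟨A.1 (.inl ()) (.inl ()), fun j => A.1 (.inl ()) (.inr j),
    A.1.submatrix .inr .inr, Matrix.IsSymm.submatrix A.2 _⟩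
  left_inv _ := rfl
  right_inv A := Subtype.ext <| Matrix.ext <| by
    rintro (i | i) (j | j)
    · rfl
    · rfl
    · exact Matrix.IsSymm.apply A.2 _ _
    · rfl

lemma expect_symmMatrices_sum {M : Type*} [AddCommMonoid M] [Module ℚ≥0 M] [AddGroup R]
    [Fintype R] [Fintype ι] [DecidableEq ι] (F : Matrix (Unit ⊕ ι) (Unit ⊕ ι) R → M) :
    𝔼 A : symmMatrices (Unit ⊕ ι) R, F A
      = 𝔼 a, 𝔼 v, 𝔼 B : symmMatrices ι R, F (bordered a v v B) := by
  rw [← Fintype.expect_equiv symmMatrices.borderedEquiv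
    (fun x => F (bordered x.1 x.2.1 x.2.1 x.2.2)) _ fun _ => rfl]
  simp only [← Finset.univ_product_univ, Finset.expect_product]

section BorderedDet

variable [CommRing R] [Fintype ι] [DecidableEq ι] [Fintype κ] [DecidableEq κ]

lemma det_bordered_mul_row (c a : R) (v w : ι → R) (B : Matrix ι ι R) :
    (bordered (c * a) (c • v) w B).det = c * (bordered a v w B).det := by
  have h := Matrix.det_mul_column (Sum.elim (fun _ => c) fun _ => 1) (bordered a v w B)
  rw [Fintype.prod_sum_type] at h
  simp only [Sum.elim_inl, Sum.elim_inr, Finset.prod_const_one, Fintype.prod_unique, mul_one] at h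
  rw [← h]
  congr 1
  ext (_ | _) (_ | _) <;> simp [bordered]

lemma det_bordered_mul_col (c a : R) (v w : ι → R) (B : Matrix ι ι R) :
    (bordered (c * a) v (c • w) B).det = c * (bordered a v w B).det := by
  have transpose_bordered (a : R) (v w : ι → R) (B : Matrix ι ι R) :
      (bordered a v w B)ᵀ = bordered a w v Bᵀ := by
    ext (_ | _) (_ | _) <;> rfl
  rw [← Matrix.det_transpose, transpose_bordered, det_bordered_mul_row, ← transpose_bordered,
    Matrix.det_transpose]

lemma det_bordered_reindex (e : ι ≃ κ) (a : R) (v w : ι → R) (B : Matrix ι ι R) :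
    (bordered a (v ∘ e.symm) (w ∘ e.symm) (Matrix.reindex e e B)).det
      = (bordered a v w B).det := by
  rw [← Matrix.det_reindex_self ((Equiv.refl Unit).sumCongr e)]
  congr 1
  ext (_ | _) (_ | _) <;> rfl

lemma det_bordered_bordered (a b : R) (v : Unit ⊕ κ → R) (w : κ → R) (C : Matrix κ κ R) :
    (bordered a v v (bordered b w w C)).det
      = (Matrix.fromBlocks !![a, v (.inl ()); v (.inl ()), b] (Matrix.of ![v ∘ .inr, w])
        (Matrix.of ![v ∘ .inr, w])ᵀ C).det := by
  let e : Unit ⊕ Unit ⊕ κ ≃ Fin 2 ⊕ κ := (Equiv.sumAssoc Unit Unit κ).symm.trans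
    ((Equiv.boolEquivPUnitSumPUnit.symm.trans finTwoEquiv.symm).sumCongr (Equiv.refl κ))
  rw [← Matrix.det_reindex_self e.symm]
  congr 1
  ext (_ | _ | _) (_ | _ | _) <;> rfl

end BorderedDet

end SymmMatrices

section DetAverage

variable {R K : Type*} (ι : Type*) {κ : Type*} [CommRing R] [Fintype R] [Field K] [CharZero K]
  [Fintype ι] [DecidableEq ι] [Fintype κ] [DecidableEq κ]

/-- The average of `f (det A)` over all symmetric `ι × ι` matrices `A` over a finite ring. -/
noncomputable def detAverage (f : R → K) : K :=
  𝔼 A : symmMatrices ι R, f A.1.det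

variable {ι}

lemma detAverage_congr (e : ι ≃ κ) (f : R → K) : detAverage ι f = detAverage κ f :=
  Fintype.expect_equiv (symmMatrices.reindex e) _ _ fun A =>
    congrArg f (Matrix.det_reindex_self e A.1).symm

lemma detAverage_comp {S : Type*} [CommRing S] [Fintype S] {φ : R →+* S} (hφ : Surjective φ)
    (f : S → K) : detAverage ι (f ∘ φ) = detAverage ι f := by
  rw [detAverage, detAverage, ← expect_comp_of_surjective
    (symmMatrices.map_surjective (φ := φ.toAddMonoidHom) hφ)]
  exact Finset.expect_congr rfl fun A _ => congrArg f (φ.map_det A.1)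

lemma detAverage_unit_sum (f : R → K) : detAverage (Unit ⊕ ι) f
    = 𝔼 a, 𝔼 v : ι → R, 𝔼 B : symmMatrices ι R, f (bordered a v v B).det :=
  expect_symmMatrices_sum fun A => f A.det

variable {f : R → K} {a : R} {v : ι → R}

lemma expect_det_fromBlocks (hf : ∀ u d, IsUnit u → f (u * d) = f d)
    {X : Matrix κ κ R} (hX : IsUnit X.det) (hXsymm : X.IsSymm) (Y : Matrix κ ι R) (c : R) :
    𝔼 C : symmMatrices ι R, f (Matrix.fromBlocks X Y (c • Yᵀ) C).det = detAverage ι f := by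
  have schur_symm : (c • Yᵀ * X⁻¹ * Y).IsSymm := by
    simp only [Matrix.smul_mul]
    refine Matrix.IsSymm.smul ?_ c
    simp only [Matrix.IsSymm, Matrix.transpose_mul, Matrix.transpose_transpose,
      Matrix.transpose_nonsing_inv, hXsymm.eq, Matrix.mul_assoc]
  -- Subtracting the correction term of the Schur complement permutes the symmetric blocks `C`.
  refine Fintype.expect_equiv (Equiv.subRight (⟨_, schur_symm⟩ : symmMatrices ι R)) _ _ fun C => ?_
  let := X.invertibleOfIsUnitDet hX
  rw [Matrix.det_fromBlocks₁₁, hf _ _ hX, Matrix.invOf_eq_nonsing_inv]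
  rfl

lemma expect_det_bordered_of_isUnit (hf : ∀ u d, IsUnit u → f (u * d) = f d) (ha : IsUnit a)
    (v : ι → R) (c : R) :
    𝔼 B : symmMatrices ι R, f (bordered a v (c • v) B).det = detAverage ι f := by
  simp only [bordered, ← Matrix.transpose_replicateRow]
  exact expect_det_fromBlocks hf (by simpa) (Matrix.IsSymm.ext fun _ _ => rfl) _ c

variable [IsLocalRing R]

lemma expect_det_bordered_of_isUnit_inl (hf : ∀ u d, IsUnit u → f (u * d) = f d)
    (ha : ¬ IsUnit a) {v : Unit ⊕ κ → R} (hv : IsUnit (v (.inl ()))) :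
    𝔼 B : symmMatrices (Unit ⊕ κ) R, f (bordered a v v B).det = detAverage κ f := by
  have isUnit_corner (b : R) : IsUnit !![a, v (.inl ()); v (.inl ()), b].det := by
    rw [Matrix.det_fin_two_of]
    by_contra h
    have := sub_mem (Ideal.mul_mem_right b _ ((mem_maximalIdeal a).2 ha)) ((mem_maximalIdeal _).2 h)
    rw [sub_sub_cancel] at this
    exact (mem_maximalIdeal _).1 this (hv.mul hv)
  have expect_block (b : R) (w : κ → R) :
      𝔼 C : symmMatrices κ R, f (bordered a v v (bordered b w w C)).det = detAverage κ f := by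
    simp only [det_bordered_bordered]
    simpa only [one_smul] using expect_det_fromBlocks hf (isUnit_corner b)
      (Matrix.IsSymm.ext fun i j => by fin_cases i <;> fin_cases j <;> rfl) _ 1
  rw [expect_symmMatrices_sum fun B => f (bordered a v v B).det]
  simp only [expect_block, Fintype.expect_const]

lemma expect_det_bordered_of_isUnit_apply (hf : ∀ u d, IsUnit u → f (u * d) = f d)
    (ha : ¬ IsUnit a) (e : ι ≃ Unit ⊕ κ) (hv : IsUnit (v (e.symm (.inl ())))) :
    𝔼 B : symmMatrices ι R, f (bordered a v v B).det = detAverage κ f := by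
  rw [← expect_det_bordered_of_isUnit_inl hf ha (v := v ∘ e.symm) hv]
  exact Fintype.expect_equiv (symmMatrices.reindex e) _ _ fun B =>
    congrArg f (det_bordered_reindex e a v v B.1).symm

variable {ϖ : R} {q : K} {n : ℕ}

lemma expect_det_bordered_fin_of_isUnit_apply (hf : ∀ u d, IsUnit u → f (u * d) = f d)
    (ha : ¬ IsUnit a) {v : Fin n → R} (i : Fin n) (hv : IsUnit (v i)) :
    𝔼 B : symmMatrices (Fin n) R, f (bordered a v v B).det = detAverage (Fin (n - 1)) f := by
  obtain _ | n := n
  · exact i.elim0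
  · exact expect_det_bordered_of_isUnit_apply hf ha
      ((finSuccEquiv' i).trans ((Equiv.optionEquivSumPUnit _).trans (Equiv.sumComm _ _)))
      (by simpa)

lemma expect_det_bordered_mul_smul (hϖ : maximalIdeal R = Ideal.span {ϖ})
    (hq : q = 1 / Nat.card (ResidueField R)) (hf : ∀ u d, IsUnit u → f (u * d) = f d) :
    𝔼 a, 𝔼 v : ι → R, 𝔼 B : symmMatrices ι R, f (bordered (ϖ * a) (ϖ • v) (ϖ • v) B).det
      = (1 - q) * detAverage ι (fun d => f (ϖ * d))
        + q * detAverage (Unit ⊕ ι) fun d => f (ϖ ^ 2 * d) := by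
  have hf' (u d) (hu : IsUnit u) : f (ϖ * (u * d)) = f (ϖ * d) := by
    rw [mul_left_comm, hf _ _ hu]
  have isUnit_corner (a) (ha : IsUnit a) :
      𝔼 v : ι → R, 𝔼 B : symmMatrices ι R, f (ϖ * (bordered a v (ϖ • v) B).det)
        = detAverage ι fun d => f (ϖ * d) := by
    simp only [expect_det_bordered_of_isUnit (f := fun d => f (ϖ * d)) hf' ha, Fintype.expect_const]
  simp only [det_bordered_mul_row]
  rw [expect_eq_of_isUnit hϖ hq isUnit_corner, detAverage_unit_sum]
  simp only [det_bordered_mul_col, pow_two, mul_assoc]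

lemma expect_det_bordered_mul (hϖ : maximalIdeal R = Ideal.span {ϖ})
    (hq : q = 1 / Nat.card (ResidueField R)) (hf : ∀ u d, IsUnit u → f (u * d) = f d) (a : R) :
    𝔼 v : Fin n → R, 𝔼 B : symmMatrices (Fin n) R, f (bordered (ϖ * a) v v B).det
      = (1 - q ^ n) * detAverage (Fin (n - 1)) f
        + q ^ n * 𝔼 v : Fin n → R, 𝔼 B : symmMatrices (Fin n) R,
          f (bordered (ϖ * a) (ϖ • v) (ϖ • v) B).det := by
  have not_isUnit_corner : ¬ IsUnit (ϖ * a) :=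
    (mem_maximalIdeal _).1 <| hϖ ▸ Ideal.mul_mem_right a _ (Ideal.mem_span_singleton_self ϖ)
  rw [expect_pi_eq_of_isUnit_apply hϖ hq fun v i =>
    expect_det_bordered_fin_of_isUnit_apply hf not_isUnit_corner i, Fintype.card_fin]

lemma detAverage_succ (hϖ : maximalIdeal R = Ideal.span {ϖ})
    (hq : q = 1 / Nat.card (ResidueField R)) (hf : ∀ u d, IsUnit u → f (u * d) = f d) (n : ℕ) :
    detAverage (Fin (n + 1)) f = (1 - q) * detAverage (Fin n) f
      + q * ((1 - q ^ n) * detAverage (Fin (n - 1)) f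
        + q ^ n * ((1 - q) * detAverage (Fin n) (fun d => f (ϖ * d))
          + q * detAverage (Fin (n + 1)) fun d => f (ϖ ^ 2 * d))) := by
  have isUnit_corner (a) (ha : IsUnit a) :
      𝔼 v : Fin n → R, 𝔼 B : symmMatrices (Fin n) R, f (bordered a v v B).det
        = detAverage (Fin n) f := by
    have expect_row (v : Fin n → R) := expect_det_bordered_of_isUnit hf ha v 1
    simp only [one_smul] at expect_row
    simp only [expect_row, Fintype.expect_const]
  let e : Fin (n + 1) ≃ Unit ⊕ Fin n :=
    (finSuccEquiv n).trans ((Equiv.optionEquivSumPUnit _).trans (Equiv.sumComm _ _))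
  rw [detAverage_congr e f, detAverage_congr e fun d => f (ϖ ^ 2 * d), detAverage_unit_sum f,
    expect_eq_of_isUnit hϖ hq isUnit_corner, ← expect_det_bordered_mul_smul hϖ hq hf]
  simp only [expect_det_bordered_mul hϖ hq hf, Finset.expect_add_distrib, Fintype.expect_const,
    ← Finset.mul_expect]

end DetAverage

section ZMod

lemma natCast_dvd_iff_castHom_eq_zero {a b : ℕ} (h : a ∣ b) (d : ZMod b) :
    (a : ZMod b) ∣ d ↔ ZMod.castHom h (ZMod a) d = 0 := by
  refine ⟨fun hd => by simpa using map_dvd (ZMod.castHom h (ZMod a)) hd, fun hd => ?_⟩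
  obtain ⟨k, rfl⟩ := ZMod.intCast_surjective d
  rw [map_intCast, ZMod.intCast_zmod_eq_zero_iff_dvd] at hd
  simpa using map_dvd (Int.castRingHom (ZMod b)) hd

variable {p : ℕ}

lemma natCast_pow_dvd_mul_iff [NeZero p] {μ N : ℕ} (j : ℕ) (h : μ ≤ N) (d : ZMod (p ^ N)) :
    ((p ^ μ : ℕ) : ZMod (p ^ N)) ∣ p ^ j * d ↔ ((p ^ (μ - j) : ℕ) : ZMod (p ^ N)) ∣ d := by
  obtain ⟨k, rfl⟩ := ZMod.natCast_zmod_surjective d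
  rw [natCast_dvd_iff_castHom_eq_zero (pow_dvd_pow p h),
    natCast_dvd_iff_castHom_eq_zero (pow_dvd_pow p ((μ.sub_le j).trans h)), ← Nat.cast_pow,
    ← Nat.cast_mul, map_natCast, map_natCast, ZMod.natCast_eq_zero_iff, ZMod.natCast_eq_zero_iff]
  obtain hj | hj := le_total μ j
  · simpa [Nat.sub_eq_zero_of_le hj] using (pow_dvd_pow p hj).mul_right k
  · nth_rw 1 [← Nat.add_sub_cancel' hj]
    rw [pow_add, Nat.mul_dvd_mul_iff_left (pow_pos (NeZero.pos p) j)]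

variable [Fact p.Prime]

instance isLocalRing_zmod_prime_pow (ν : ℕ) : IsLocalRing (ZMod (p ^ (ν + 1))) :=
  have : Fact (1 < p ^ (ν + 1)) := ⟨Nat.one_lt_pow ν.succ_ne_zero (Fact.out : p.Prime).one_lt⟩
  .of_surjective' (PadicInt.toZModPow (ν + 1)) (ZMod.ringHom_surjective _)

lemma maximalIdeal_zmod_prime_pow (ν : ℕ) :
    maximalIdeal (ZMod (p ^ (ν + 1))) = Ideal.span {(p : ZMod (p ^ (ν + 1)))} := by
  rw [← map_maximalIdeal_of_surjective (PadicInt.toZModPow (p := p) (ν + 1))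
    (ZMod.ringHom_surjective _), PadicInt.maximalIdeal_eq_span_p, Ideal.map_span,
    Set.image_singleton, map_natCast]

lemma natCard_residueField_zmod_prime_pow (ν : ℕ) :
    Nat.card (ResidueField (ZMod (p ^ (ν + 1)))) = p := by
  let φ := ZMod.castHom (dvd_pow_self p ν.succ_ne_zero) (ZMod p)
  have hφ : Surjective φ := ZMod.ringHom_surjective φ
  rw [ResidueField, ← ker_eq_maximalIdeal φ hφ,
    Nat.card_congr (RingHom.quotientKerEquivOfSurjective hφ).toEquiv, Nat.card_zmod]

end ZMod

section Psym

lemma Psym_eq_detAverage (n m : ℕ) [NeZero m] :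
    Psym n m = detAverage (Fin n) ({d : ZMod m | d ≠ 0}.indicator 1) := by
  have natCard_eq : Nsym n m = Nat.card {A : symmMatrices (Fin n) (ZMod m) | A.1.det ≠ 0} :=
    Nat.card_congr (Equiv.subtypeSubtypeEquivSubtypeInter
      (fun A : Matrix (Fin n) (Fin n) (ZMod m) => A.IsSymm) fun A => A.det ≠ 0).symm
  refine Eq.trans ?_ (expect_indicator_one {A : symmMatrices (Fin n) (ZMod m) | A.1.det ≠ 0}).symm
  rw [Psym, natCard_eq, symmMatrices.natCard, Nat.card_zmod, Fintype.card_fin,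
    Nat.choose_two_right, Nat.add_sub_cancel, mul_comm n, Nat.cast_pow]

lemma detAverage_not_dvd_eq_Psym {a b : ℕ} [NeZero b] (h : a ∣ b) (n : ℕ) :
    detAverage (Fin n) ({d : ZMod b | ¬ (a : ZMod b) ∣ d}.indicator 1) = Psym n a := by
  have : NeZero a := ⟨ne_zero_of_dvd_ne_zero (NeZero.ne b) h⟩
  rw [Psym_eq_detAverage, ← detAverage_comp (ZMod.castHom_surjective h)]
  simp only [natCast_dvd_iff_castHom_eq_zero h]
  rfl

lemma Psym_one_right (n : ℕ) : Psym n 1 = 0 := by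
  have : IsEmpty {A : Matrix (Fin n) (Fin n) (ZMod 1) // A.IsSymm ∧ A.det ≠ 0} :=
    ⟨fun A => A.2.2 (Subsingleton.elim _ _)⟩
  simp [Psym, Nsym]

lemma Psym_zero_left {m : ℕ} (hm : m ≠ 1) : Psym 0 m = 1 := by
  have : Nontrivial (ZMod m) := ZMod.nontrivial_iff.2 hm
  have : Unique {A : Matrix (Fin 0) (Fin 0) (ZMod m) // A.IsSymm ∧ A.det ≠ 0} :=
    ⟨⟨0, Matrix.isSymm_zero, by simp⟩, fun _ => Subsingleton.elim _ _⟩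
  rw [Psym, Nsym, Nat.card_unique]
  simp

lemma abs_Psym_le_one (n m : ℕ) [NeZero m] : |Psym n m| ≤ 1 := by
  rw [Psym_eq_detAverage, abs_of_nonneg]
  · exact Finset.expect_le Finset.univ_nonempty fun A _ =>
      Set.indicator_le_self' (fun _ _ => zero_le_one) _
  · exact Finset.expect_nonneg fun A _ => Set.indicator_nonneg (fun _ _ => zero_le_one) _

variable {p : ℕ} {q : ℝ}

lemma detAverage_not_dvd_pow_mul_eq_Psym [NeZero p] {μ N : ℕ} (h : μ ≤ N) (n j : ℕ) :
    detAverage (Fin n) (fun d : ZMod (p ^ N) =>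
      {d : ZMod (p ^ N) | ¬ ((p ^ μ : ℕ) : ZMod (p ^ N)) ∣ d}.indicator (1 : ZMod (p ^ N) → ℝ)
        (p ^ j * d)) = Psym n (p ^ (μ - j)) := by
  rw [← detAverage_not_dvd_eq_Psym (pow_dvd_pow p ((μ.sub_le j).trans h))]
  congr 1
  ext d
  simp only [Set.indicator_apply, Set.mem_ofPred_eq, natCast_pow_dvd_mul_iff j h, Pi.one_apply]

/-- The truncated subtractions are harmless: in the exponents because `Psym n 1 = 0`, and in
`n - 1` because its coefficient vanishes at `n = 0`. -/
lemma Psym_succ_prime_pow [Fact p.Prime] (hq : q = 1 / p) (n μ : ℕ) :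
    Psym (n + 1) (p ^ μ) = (1 - q) * Psym n (p ^ μ)
      + q * ((1 - q ^ n) * Psym (n - 1) (p ^ μ)
        + q ^ n * ((1 - q) * Psym n (p ^ (μ - 1)) + q * Psym (n + 1) (p ^ (μ - 2)))) := by
  -- Modulus `p ^ (μ + 1)` rather than `p ^ μ`, so that the ring is local even when `μ = 0`.
  have hμ := μ.le_succ
  rw [← natCard_residueField_zmod_prime_pow (p := p) μ] at hq
  have recurrence := detAverage_succ (maximalIdeal_zmod_prime_pow μ) hq
    (f := {d : ZMod (p ^ (μ + 1)) | ¬ ((p ^ μ : ℕ) : ZMod (p ^ (μ + 1))) ∣ d}.indicator 1)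
    (fun u d hu => by
      simp only [Set.indicator_apply, Set.mem_ofPred_eq, hu.dvd_mul_left, Pi.one_apply]) n
  have mul_p := detAverage_not_dvd_pow_mul_eq_Psym (p := p) hμ n 1
  rw [pow_one] at mul_p
  simpa only [mul_p, detAverage_not_dvd_pow_mul_eq_Psym hμ,
    detAverage_not_dvd_eq_Psym (pow_dvd_pow p hμ)] using recurrence

end Psym

section Recurrence

variable {K : Type*} [Field K] {q x : K} {F : ℕ → K}

/-- The three-term recurrence in `n` satisfied by the generating functions of the proportions of
nonsingular symmetric `n × n` matrices. At `n = 0` the coefficient of the truncated `F (n - 1)`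
vanishes. -/
def SymmDetRecurrence (q x : K) (F : ℕ → K) : Prop :=
  ∀ n, F (n + 1) * (1 - q ^ (n + 2) * x ^ 2)
    = (1 - q) * (1 + q ^ (n + 1) * x) * F n + q * (1 - q ^ n) * F (n - 1)

namespace SymmDetRecurrence

lemma even_index_ratio_of_odd (hF : SymmDetRecurrence q x F) {k : ℕ}
    (odd : F (2 * k + 1) * (1 - q ^ (2 * k + 1) * x) = F (2 * k) * (1 - q ^ (2 * k + 1))) :
    F (2 * k + 2) * (1 - q ^ (2 * k + 3) * x ^ 2)
      = F (2 * k + 1) * (1 - q ^ (2 * k + 3) * x) := by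
  have recurrence := hF (2 * k + 1)
  rw [Nat.add_sub_cancel] at recurrence
  linear_combination recurrence - q * odd

lemma odd_index_ratio (hF : SymmDetRecurrence q x F) (hx : ∀ n, 1 - q ^ n * x ^ 2 ≠ 0) (k : ℕ) :
    F (2 * k + 1) * (1 - q ^ (2 * k + 1) * x) = F (2 * k) * (1 - q ^ (2 * k + 1)) := by
  refine mul_right_cancel₀ (hx (2 * k + 2)) ?_
  induction k with
  | zero => linear_combination (1 - q * x) * hF 0
  | succ k ih =>
    have even := hF.even_index_ratio_of_odd (mul_right_cancel₀ (hx (2 * k + 2)) ih)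
    have recurrence := hF (2 * k + 2)
    rw [show 2 * k + 2 - 1 = 2 * k + 1 from rfl] at recurrence
    linear_combination
      (1 - q ^ (2 * k + 3) * x) * recurrence - q * (1 - q ^ (2 * k + 2)) * even

lemma even_index_ratio (hF : SymmDetRecurrence q x F) (hx : ∀ n, 1 - q ^ n * x ^ 2 ≠ 0) (k : ℕ) :
    F (2 * k + 2) * (1 - q ^ (2 * k + 3) * x ^ 2)
      = F (2 * k + 1) * (1 - q ^ (2 * k + 3) * x) :=
  hF.even_index_ratio_of_odd (hF.odd_index_ratio hx k)

theorem odd_index_eq_prod (hF : SymmDetRecurrence q x F) (hx : ∀ n, 1 - q ^ n * x ≠ 0)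
    (hx2 : ∀ n, 1 - q ^ n * x ^ 2 ≠ 0) (k : ℕ) :
    F (2 * k + 1) = F 0 * ((1 - q * x ^ 2) / (1 - q * x)) *
      ∏ j ∈ Finset.range (k + 1), (1 - q ^ (2 * j + 1)) / (1 - q ^ (2 * j + 1) * x ^ 2) := by
  induction k with
  | zero =>
    have den_ne_zero : 1 - q * x ≠ 0 := by simpa using hx 1
    have num_ne_zero : 1 - q * x ^ 2 ≠ 0 := by simpa using hx2 1
    have odd := hF.odd_index_ratio hx2 0
    simp only [mul_zero, zero_add, pow_one, Finset.prod_range_one] at odd ⊢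
    rw [eq_div_of_mul_eq den_ne_zero odd]
    field_simp
  | succ k ih =>
    have ratio : F (2 * k + 3)
        = F (2 * k + 1) * ((1 - q ^ (2 * k + 3)) / (1 - q ^ (2 * k + 3) * x ^ 2)) := by
      rw [← mul_div_assoc]
      refine eq_div_of_mul_eq (hx2 _) (mul_right_cancel₀ (hx (2 * k + 3)) ?_)
      linear_combination (1 - q ^ (2 * k + 3) * x ^ 2) * hF.odd_index_ratio hx2 (k + 1)
        + (1 - q ^ (2 * k + 3)) * hF.even_index_ratio hx2 k
    rw [Finset.prod_range_succ, ← mul_assoc, ← ih]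
    exact ratio

end SymmDetRecurrence

end Recurrence

section GeneratingFunction

lemma hasSum_pred_mul_pow {𝕜 : Type*} [CommRing 𝕜] [TopologicalSpace 𝕜] [IsTopologicalRing 𝕜]
    {g : ℕ → 𝕜} {x s : 𝕜} (hg : g 0 = 0) (h : HasSum (fun μ => g μ * x ^ μ) s) :
    HasSum (fun μ => g (μ - 1) * x ^ μ) (x * s) := by
  rw [← hasSum_nat_add_iff' 1]
  simpa [hg, pow_succ', mul_left_comm] using h.mul_left x

variable {p : ℕ} {q x : ℝ}

/-- The generating function of the proportions `Psym n (p ^ μ)`. The index `μ = 0` is included, as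
`Psym n 1 = 0`. -/
noncomputable def PsymSeries (p n : ℕ) (x : ℝ) : ℝ :=
  ∑' μ : ℕ, Psym n (p ^ μ) * x ^ μ

lemma hasSum_PsymSeries [NeZero p] (hx : |x| < 1) (n : ℕ) :
    HasSum (fun μ : ℕ => Psym n (p ^ μ) * x ^ μ) (PsymSeries p n x) := by
  refine (Summable.of_norm_bounded (summable_geometric_of_abs_lt_one hx).abs fun μ => ?_).hasSum
  rw [Real.norm_eq_abs, abs_mul]
  exact mul_le_of_le_one_left (abs_nonneg _) (abs_Psym_le_one _ _)

lemma hasSum_PsymSeries_succ [NeZero p] (hx : |x| < 1) (n : ℕ) :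
    HasSum (fun μ : ℕ => Psym n (p ^ (μ + 1)) * x ^ (μ + 1)) (PsymSeries p n x) := by
  simpa [Psym_one_right] using (hasSum_nat_add_iff' 1).2 (hasSum_PsymSeries (p := p) hx n)

lemma PsymSeries_zero (hp : 1 < p) (hx : |x| < 1) : PsymSeries p 0 x = x / (1 - x) := by
  have : NeZero p := ⟨(zero_lt_one.trans hp).ne'⟩
  have geometric := (hasSum_geometric_of_abs_lt_one hx).mul_left x
  rw [← div_eq_mul_inv] at geometric
  refine (hasSum_PsymSeries_succ hx 0).unique (geometric.congr_fun fun μ => ?_)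
  rw [Psym_zero_left (Nat.one_lt_pow μ.succ_ne_zero hp).ne', one_mul, pow_succ']

lemma symmDetRecurrence_PsymSeries [Fact p.Prime] (hq : q = 1 / p) (hx : |x| < 1) :
    SymmDetRecurrence q x fun n => PsymSeries p n x := by
  intro n
  have hasSum := hasSum_PsymSeries (p := p) hx
  have hasSum_pred (n : ℕ) := hasSum_pred_mul_pow (g := fun μ => Psym n (p ^ μ))
    (by rw [pow_zero, Psym_one_right]) (hasSum n)
  have hasSum_pred_pred (n : ℕ) := hasSum_pred_mul_pow (g := fun μ => Psym n (p ^ (μ - 1)))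
    (by rw [Nat.zero_sub, pow_zero, Psym_one_right]) (hasSum_pred n)
  have divisible_row := ((hasSum_pred n).mul_left (1 - q)).add
    ((hasSum_pred_pred (n + 1)).mul_left q)
  have nonunit_corner := ((hasSum (n - 1)).mul_left (1 - q ^ n)).add
    (divisible_row.mul_left (q ^ n))
  have recurrence := ((hasSum n).mul_left (1 - q)).add (nonunit_corner.mul_left q)
  have unique := (hasSum (n + 1)).unique (recurrence.congr_fun fun μ => by
    rw [Psym_succ_prime_pow hq, Nat.sub_sub]
    ring)
  linear_combination unique

lemma one_sub_pow_mul_ne_zero {q y : ℝ} (hq : |q| ≤ 1) (hy : |y| < 1) (n : ℕ) :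
    1 - q ^ n * y ≠ 0 := by
  have abs_lt_one : |q ^ n * y| < 1 := by
    rw [abs_mul, abs_pow]
    exact (mul_le_of_le_one_left (abs_nonneg y) (pow_le_one₀ (abs_nonneg q) hq)).trans_lt hy
  exact (sub_pos.2 (abs_lt.1 abs_lt_one).2).ne'

end GeneratingFunction

theorem Psym_generating_function_odd (p : ℕ) (hp : p.Prime) (q : ℝ)
    (hq : q = 1 / p) (k : ℕ) (x : ℝ) (hx : |x| < 1) :
    HasSum (fun μ : ℕ => Psym (2 * k + 1) (p ^ (μ + 1)) * x ^ (μ + 1))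
      ((x / (1 - x)) * ((1 - q * x ^ 2) / (1 - q * x)) *
        ∏ j ∈ Finset.range (k + 1),
          (1 - q ^ (2 * j + 1)) / (1 - q ^ (2 * j + 1) * x ^ 2)) := by
  have : Fact p.Prime := ⟨hp⟩
  have hq1 : |q| ≤ 1 := by
    rw [hq, one_div, abs_of_nonneg (by positivity)]
    exact Nat.cast_inv_le_one p
  have hx2 : |x ^ 2| < 1 := by
    rw [abs_pow]
    exact pow_lt_one₀ (abs_nonneg x) hx two_ne_zero
  have recurrence := symmDetRecurrence_PsymSeries hq hx
  rw [← PsymSeries_zero hp.one_lt hx, ← recurrence.odd_index_eq_prod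
    (one_sub_pow_mul_ne_zero hq1 hx) (one_sub_pow_mul_ne_zero hq1 hx2)]
  exact hasSum_PsymSeries_succ hx _
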